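/- Let q be a real number with 0 < q < 1; then Ω₁ ≠ 0 and Ω₂ ≠ 0, and 1/Ω₁² + 1/Ω₂² = φ(−q)⁴/(16q⁴·ψ(−q⁵)⁴) + φ(−q⁵)⁴/(16q⁴·ψ(−q⁵)⁴) − φ(−q)²·φ(−q⁵)²/(8q⁴·ψ(−q⁵)⁴) + 2·φ(−q)·ψ(q⁵)/(q·φ(−q^{10})·ψ(−q)). -/

import Mathlib

/-- Ramanujan's theta function `f(a,b) = ∑_{n ∈ ℤ} a^(n(n+1)/2) b^(n(n-1)/2)`. -/
noncomputable def ramTheta (a b : ℂ) : ℂ :=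
  ∑' n : ℤ, a ^ ((n * (n + 1)) / 2).toNat * b ^ ((n * (n - 1)) / 2).toNat

/-- `φ(q) = f(q,q)`. -/
noncomputable def phi (q : ℂ) : ℂ := ramTheta q q

/-- `ψ(q) = f(q,q³)`. -/
noncomputable def psi (q : ℂ) : ℂ := ramTheta q (q ^ 3)

/-- `(a;q)_∞ = ∏_{k=0}^∞ (1 - a q^k)`. -/
noncomputable def qPochInf (a q : ℂ) : ℂ := ∏' k : ℕ, (1 - a * q ^ k)

noncomputable def Omega1 (q : ℝ) : ℂ :=
  ramTheta ((q : ℂ) ^ 4) ((q : ℂ) ^ 6) / ramTheta (-(q : ℂ)) (-(q : ℂ) ^ 9)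

noncomputable def Omega2 (q : ℝ) : ℂ :=
  (q : ℂ) * ramTheta ((q : ℂ) ^ 2) ((q : ℂ) ^ 8) / ramTheta (-(q : ℂ) ^ 3) (-(q : ℂ) ^ 7)

open Filter Topology

namespace RT

/-- triangular numbers -/
def tri (n : ℤ) : ℤ := n * (n + 1) / 2

lemma two_tri (n : ℤ) : 2 * tri n = n * (n + 1) := by
  unfold tri
  exact Int.mul_ediv_cancel' (Int.even_mul_succ_self n).two_dvd

lemma tri_eq {n m : ℤ} (h : 2 * m = n * (n + 1)) : tri n = m := by
  have := two_tri n
  omega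

lemma tri_nonneg (n : ℤ) : 0 ≤ tri n := by
  have h := two_tri n
  rcases le_or_gt 0 n with h0 | h0
  · nlinarith
  · nlinarith

/-- the general term -/
noncomputable def T (a b : ℂ) (n : ℤ) : ℂ := a ^ (tri n) * b ^ (tri (-n))

lemma ramTheta_eq (a b : ℂ) : ramTheta a b = ∑' n : ℤ, T a b n := by
  unfold ramTheta T
  refine tsum_congr fun n => ?_
  have h1 : ((n * (n + 1)) / 2) = tri n := rfl
  have h2 : ((n * (n - 1)) / 2) = tri (-n) := by
    unfold tri
    congr 1
    ring
  rw [h1, h2, ← zpow_natCast, ← zpow_natCast, Int.toNat_of_nonneg (tri_nonneg _),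
    Int.toNat_of_nonneg (tri_nonneg _)]

lemma tri_add_neg (n : ℤ) : tri n + tri (-n) = n ^ 2 := by
  have h1 := two_tri n
  have h2 := two_tri (-n)
  nlinarith

lemma summable_norm_T {a b : ℂ} (ha : ‖a‖ < 1) (hb : ‖b‖ < 1) :
    Summable fun n => ‖T a b n‖ := by
  obtain ⟨r, hr, hr1⟩ := exists_between (max_lt ha hb)
  have hra : ‖a‖ ≤ r := (le_max_left _ _).trans hr.le
  have hrb : ‖b‖ ≤ r := (le_max_right _ _).trans hr.le
  have hr0 : 0 ≤ r := (norm_nonneg a).trans hra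
  have key : ∀ n : ℤ, ‖T a b n‖ ≤ r ^ n.natAbs := by
    intro n
    obtain ⟨s, hs⟩ := Int.eq_ofNat_of_zero_le (tri_nonneg n)
    obtain ⟨t, ht⟩ := Int.eq_ofNat_of_zero_le (tri_nonneg (-n))
    have hst := tri_add_neg n
    unfold T
    rw [hs, ht, zpow_natCast, zpow_natCast, norm_mul, norm_pow, norm_pow]
    calc ‖a‖ ^ s * ‖b‖ ^ t ≤ r ^ s * r ^ t := by gcongr
      _ = r ^ (s + t) := (pow_add _ _ _).symm
      _ ≤ r ^ n.natAbs := by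
        apply pow_le_pow_of_le_one hr0 hr1.le
        rw [hs, ht] at hst
        have h3 : s + t = n.natAbs ^ 2 := by
          zify
          rw [hst, sq_abs]
        rw [h3]
        exact Nat.le_self_pow (by norm_num) _
  refine Summable.of_nonneg_of_le (fun _ => norm_nonneg _) key ?_
  have hg := summable_geometric_of_lt_one hr0 hr1
  exact Summable.of_nat_of_neg (by simpa using hg) (by simpa using hg)

lemma ramTheta_comm (a b : ℂ) : ramTheta a b = ramTheta b a := by
  rw [ramTheta_eq, ramTheta_eq, ← (Equiv.neg ℤ).tsum_eq]
  refine tsum_congr fun n => ?_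
  simp [T, mul_comm]

lemma T_mul_eq {a b c d : ℂ} (ha : a ≠ 0) (hb : b ≠ 0) (hc : c ≠ 0) (hd : d ≠ 0)
    (h : a * b = c * d) (u v : ℤ) :
    T a b (u + v) * T c d (u - v) = T (a * c) (b * d) u * T (a * d) (b * c) v := by
  have e1 : tri (u + v) = tri u + tri v + u * v :=
    tri_eq (by linear_combination two_tri u + two_tri v)
  have e2 : tri (-(u + v)) = tri (-u) + tri (-v) + u * v :=
    tri_eq (by linear_combination two_tri (-u) + two_tri (-v))
  have e3 : tri (u - v) = tri u + tri (-v) - u * v :=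
    tri_eq (by linear_combination two_tri u + two_tri (-v))
  have e4 : tri (-(u - v)) = tri (-u) + tri v - u * v :=
    tri_eq (by linear_combination two_tri (-u) + two_tri v)
  have h5 : a ^ (u * v) * b ^ (u * v) = c ^ (u * v) * d ^ (u * v) := by
    rw [← mul_zpow, ← mul_zpow, h]
  unfold T
  rw [e1, e2, e3, e4]
  simp only [zpow_add₀ ha, zpow_add₀ hb, zpow_add₀ hc, zpow_add₀ hd, zpow_sub₀ hc, zpow_sub₀ hd,
    mul_zpow]
  have hc' : c ^ (u * v) ≠ 0 := zpow_ne_zero _ hc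
  have hd' : d ^ (u * v) ≠ 0 := zpow_ne_zero _ hd
  field_simp
  linear_combination h5

lemma T_mul_odd {a b c d : ℂ} (ha : a ≠ 0) (hb : b ≠ 0) (hc : c ≠ 0) (hd : d ≠ 0)
    (h : a * b = c * d) (u v : ℤ) :
    T a b (u + v + 1) * T c d (u - v)
      = a * (T (a ^ 2 * b * c) (d / a) u * T (a ^ 2 * b * d) (c / a) v) := by
  have e1 : tri (u + v + 1) = tri u + tri v + u * v + u + v + 1 :=
    tri_eq (by linear_combination two_tri u + two_tri v)
  have e2 : tri (-(u + v + 1)) = tri u + tri v + u * v :=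
    tri_eq (by linear_combination two_tri u + two_tri v)
  have e3 : tri (u - v) = tri u + tri v - v - u * v :=
    tri_eq (by linear_combination two_tri u + two_tri v)
  have e4 : tri (-(u - v)) = tri u - u + tri v - u * v :=
    tri_eq (by linear_combination two_tri u + two_tri v)
  have e5 : tri (-u) = tri u - u := tri_eq (by linear_combination two_tri u)
  have e6 : tri (-v) = tri v - v := tri_eq (by linear_combination two_tri v)
  have h5 : a ^ (u * v) * b ^ (u * v) = c ^ (u * v) * d ^ (u * v) := by
    rw [← mul_zpow, ← mul_zpow, h]
  unfold T
  rw [e1, e2, e3, e4, e5, e6]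
  simp only [pow_two, div_zpow, zpow_add₀ ha, zpow_add₀ hb, zpow_add₀ hc, zpow_add₀ hd,
    zpow_sub₀ hc, zpow_sub₀ hd, zpow_sub₀ ha, mul_zpow, zpow_one]
  generalize a ^ (u * v) = A at *
  generalize b ^ (u * v) = B at *
  have hc' : c ^ (u * v) ≠ 0 := zpow_ne_zero _ hc
  have hd' : d ^ (u * v) ≠ 0 := zpow_ne_zero _ hd
  generalize c ^ (u * v) = C at *
  generalize d ^ (u * v) = D at *
  have g1 : a ^ u ≠ 0 := zpow_ne_zero _ ha
  have g2 : a ^ v ≠ 0 := zpow_ne_zero _ ha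
  have g3 : d ^ u ≠ 0 := zpow_ne_zero _ hd
  have g4 : c ^ v ≠ 0 := zpow_ne_zero _ hc
  have g5 : a ^ tri u ≠ 0 := zpow_ne_zero _ ha
  have g6 : a ^ tri v ≠ 0 := zpow_ne_zero _ ha
  generalize a ^ u = x1 at *
  generalize a ^ v = x2 at *
  generalize d ^ u = x3 at *
  generalize c ^ v = x4 at *
  generalize a ^ tri u = x5 at *
  generalize a ^ tri v = x6 at *
  field_simp
  linear_combination h5

/-- parity splitting of a double sum -/
lemma bij2 : Function.Bijective (fun x : Bool × (ℤ × ℤ) =>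
    ((x.2.1 + x.2.2 + (if x.1 then 1 else 0), x.2.1 - x.2.2) : ℤ × ℤ)) := by
  constructor
  · rintro ⟨r, u, v⟩ ⟨r', u', v'⟩ h
    cases r <;> cases r' <;> simp at h ⊢ <;> omega
  · rintro ⟨m, n⟩
    rcases Int.emod_two_eq_zero_or_one (m + n) with h | h
    · refine ⟨(false, (m + n) / 2, (m - n) / 2), ?_⟩
      simp
      omega
    · refine ⟨(true, (m + n - 1) / 2, (m - n - 1) / 2), ?_⟩
      simp
      omega

lemma tsum_mul_T {a b c d : ℂ} (ha : ‖a‖ < 1) (hb : ‖b‖ < 1) (hc : ‖c‖ < 1) (hd : ‖d‖ < 1) :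
    ramTheta a b * ramTheta c d = ∑' x : ℤ × ℤ, T a b x.1 * T c d x.2 := by
  rw [ramTheta_eq, ramTheta_eq]
  exact tsum_mul_tsum_of_summable_norm (summable_norm_T ha hb) (summable_norm_T hc hd)

lemma summable_mul_T {a b c d : ℂ} (ha : ‖a‖ < 1) (hb : ‖b‖ < 1) (hc : ‖c‖ < 1) (hd : ‖d‖ < 1) :
    Summable fun x : ℤ × ℤ => T a b x.1 * T c d x.2 :=
  summable_mul_of_summable_norm (summable_norm_T ha hb) (summable_norm_T hc hd)

lemma theta_mul_split {a b c d : ℂ} (ha : a ≠ 0) (hb : b ≠ 0) (hc : c ≠ 0) (hd : d ≠ 0)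
    (h : a * b = c * d) (ha1 : ‖a‖ < 1) (hb1 : ‖b‖ < 1) (hc1 : ‖c‖ < 1) (hd1 : ‖d‖ < 1)
    (h1 : ‖a * c‖ < 1) (h2 : ‖b * d‖ < 1) (h3 : ‖a * d‖ < 1) (h4 : ‖b * c‖ < 1)
    (h5 : ‖a ^ 2 * b * c‖ < 1) (h6 : ‖d / a‖ < 1) (h7 : ‖a ^ 2 * b * d‖ < 1) (h8 : ‖c / a‖ < 1) :
    ramTheta a b * ramTheta c d = ramTheta (a * c) (b * d) * ramTheta (a * d) (b * c)
      + a * (ramTheta (a ^ 2 * b * c) (d / a) * ramTheta (a ^ 2 * b * d) (c / a)) := by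
  rw [tsum_mul_T ha1 hb1 hc1 hd1, tsum_mul_T h1 h2 h3 h4, tsum_mul_T h5 h6 h7 h8,
    ← (Equiv.ofBijective _ bij2).tsum_eq]
  have hs := (Equiv.ofBijective _ bij2).summable_iff.mpr (summable_mul_T ha1 hb1 hc1 hd1)
  have hs' := hs.tsum_prod
  refine hs'.trans ?_
  rw [tsum_fintype, Fintype.sum_bool, add_comm, ← tsum_mul_left]
  congr 1
  · refine tsum_congr fun x => ?_
    simpa using T_mul_eq ha hb hc hd h x.1 x.2
  · refine tsum_congr fun x => ?_
    simpa using T_mul_odd ha hb hc hd h x.1 x.2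

/-- splitting modulo 5 -/
def map5 (x : Fin 5 × (ℤ × ℤ)) : ℤ × ℤ :=
  match x with
  | (0, (a, b)) => (a + 2 * b, 2 * a - b)
  | (1, (a, b)) => (1 + a + 2 * b, 2 * a - b)
  | (2, (a, b)) => (-(1 + a + 2 * b), -(2 * a - b))
  | (3, (a, b)) => (-(2 * a - b), 1 + a + 2 * b)
  | (4, (a, b)) => (2 * a - b, -(1 + a + 2 * b))

lemma bij5 : Function.Bijective map5 := by
  constructor
  · rintro ⟨r, u, v⟩ ⟨r', u', v'⟩ h
    fin_cases r <;> fin_cases r' <;> simp [map5] at h ⊢ <;> omega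
  · rintro ⟨m, n⟩
    have h : (m + 2 * n) % 5 = 0 ∨ (m + 2 * n) % 5 = 1 ∨ (m + 2 * n) % 5 = 4 ∨
      (m + 2 * n) % 5 = 2 ∨ (m + 2 * n) % 5 = 3 := by omega
    rcases h with h | h | h | h | h
    · refine ⟨(0, (m + 2 * n) / 5, (2 * m - n) / 5), ?_⟩
      simp [map5]
      omega
    · refine ⟨(1, (m - 1 + 2 * n) / 5, (2 * (m - 1) - n) / 5), ?_⟩
      simp [map5]
      omega
    · refine ⟨(2, (-m - 1 - 2 * n) / 5, (2 * (-m - 1) + n) / 5), ?_⟩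
      simp [map5]
      omega
    · refine ⟨(3, (n - 1 - 2 * m) / 5, (2 * (n - 1) + m) / 5), ?_⟩
      simp [map5]
      omega
    · refine ⟨(4, (-n - 1 + 2 * m) / 5, (2 * (-n - 1) - m) / 5), ?_⟩
      simp [map5]
      omega

lemma T_pow {x : ℂ} (hx : x ≠ 0) (i j : ℕ) (n : ℤ) :
    T (x ^ i) (x ^ j) n = x ^ (i * tri n + j * tri (-n)) := by
  unfold T
  rw [← zpow_natCast, ← zpow_natCast, ← zpow_mul, ← zpow_mul, zpow_add₀ hx]

lemma T_one {x : ℂ} (hx : x ≠ 0) (n : ℤ) : T x x n = x ^ (n ^ 2) := by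
  unfold T
  rw [← zpow_add₀ hx, tri_add_neg]

lemma phi_five {x : ℂ} (hx : x ≠ 0) (hx1 : ‖x‖ < 1) :
    phi x ^ 2 = phi (x ^ 5) ^ 2
      + 4 * x * (ramTheta (x ^ 7) (x ^ 3) * ramTheta (x ^ 9) x) := by
  have hp : ∀ n : ℕ, n ≠ 0 → ‖x ^ n‖ < 1 := fun n hn => by
    rw [norm_pow]
    exact pow_lt_one₀ (norm_nonneg _) hx1 hn
  unfold phi
  rw [pow_two, pow_two, tsum_mul_T hx1 hx1 hx1 hx1,
    tsum_mul_T (hp 5 (by norm_num)) (hp 5 (by norm_num)) (hp 5 (by norm_num)) (hp 5 (by norm_num)),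
    tsum_mul_T (hp 7 (by norm_num)) (hp 3 (by norm_num)) (hp 9 (by norm_num)) hx1,
    ← (Equiv.ofBijective _ bij5).tsum_eq]
  have hs := (Equiv.ofBijective _ bij5).summable_iff.mpr (summable_mul_T hx1 hx1 hx1 hx1)
  have hs' := hs.tsum_prod
  refine hs'.trans ?_
  rw [tsum_fintype, Fin.sum_univ_five]
  have k0 : ∀ a b : ℤ, x ^ ((a + 2 * b) ^ 2) * x ^ ((2 * a - b) ^ 2)
      = T (x ^ 5) (x ^ 5) a * T (x ^ 5) (x ^ 5) b := by
    intro a b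
    rw [T_pow hx, T_pow hx, ← zpow_add₀ hx, ← zpow_add₀ hx]
    congr 1
    push_cast
    linear_combination -5 * tri_add_neg a - 5 * tri_add_neg b
  have k1 : ∀ a b : ℤ, x ^ ((1 + a + 2 * b) ^ 2) * x ^ ((2 * a - b) ^ 2)
      = x * (T (x ^ 7) (x ^ 3) a * T (x ^ 9) x b) := by
    intro a b
    have : T (x ^ 9) x b = x ^ (9 * tri b + tri (-b)) := by
      have := T_pow hx 9 1 b
      simpa using this
    rw [T_pow hx, this, ← zpow_add₀ hx, ← zpow_add₀ hx, ← zpow_one_add₀ hx]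
    congr 1
    push_cast
    linear_combination -3 * tri_add_neg a - tri_add_neg b - 2 * two_tri a - 4 * two_tri b
  have hA : ∀ f g : ℤ × ℤ → ℂ, (∀ a b, f (a, b) = g (a, b)) → tsum f = tsum g := by
    intro f g h
    exact tsum_congr fun ⟨a, b⟩ => h a b
  have c0 : ∑' y : ℤ × ℤ, T x x (map5 (0, y)).1 * T x x (map5 (0, y)).2
      = ∑' y : ℤ × ℤ, T (x ^ 5) (x ^ 5) y.1 * T (x ^ 5) (x ^ 5) y.2 := by
    apply hA
    intro a b
    simp only [map5, T_one hx]
    exact k0 a b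
  have c1 : ∑' y : ℤ × ℤ, T x x (map5 (1, y)).1 * T x x (map5 (1, y)).2
      = x * ∑' y : ℤ × ℤ, T (x ^ 7) (x ^ 3) y.1 * T (x ^ 9) x y.2 := by
    rw [← tsum_mul_left]
    apply hA
    intro a b
    simp only [map5, T_one hx]
    exact k1 a b
  have c2 : ∑' y : ℤ × ℤ, T x x (map5 (2, y)).1 * T x x (map5 (2, y)).2
      = x * ∑' y : ℤ × ℤ, T (x ^ 7) (x ^ 3) y.1 * T (x ^ 9) x y.2 := by
    rw [← tsum_mul_left]
    apply hA
    intro a b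
    simp only [map5, T_one hx, neg_sq]
    exact k1 a b
  have c3 : ∑' y : ℤ × ℤ, T x x (map5 (3, y)).1 * T x x (map5 (3, y)).2
      = x * ∑' y : ℤ × ℤ, T (x ^ 7) (x ^ 3) y.1 * T (x ^ 9) x y.2 := by
    rw [← tsum_mul_left]
    apply hA
    intro a b
    simp only [map5, T_one hx, neg_sq]
    rw [mul_comm]
    exact k1 a b
  have c4 : ∑' y : ℤ × ℤ, T x x (map5 (4, y)).1 * T x x (map5 (4, y)).2
      = x * ∑' y : ℤ × ℤ, T (x ^ 7) (x ^ 3) y.1 * T (x ^ 9) x y.2 := by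
    rw [← tsum_mul_left]
    apply hA
    intro a b
    simp only [map5, T_one hx, neg_sq]
    rw [mul_comm]
    exact k1 a b
  simp only [Equiv.ofBijective_apply, Function.comp_apply]
  rw [c0, c1, c2, c3, c4]
  ring

lemma summable_E (x : ℂ) {p : ℂ} (hp : ‖p‖ < 1) : Summable fun k : ℕ => ‖-(x * p ^ k)‖ := by
  simp only [norm_neg, norm_mul, norm_pow]
  exact (summable_geometric_of_lt_one (norm_nonneg _) hp).mul_left _

lemma tendsto_E (x : ℂ) {p : ℂ} (hp : ‖p‖ < 1) :
    Tendsto (fun n => ∏ k ∈ Finset.range n, (1 - x * p ^ k)) atTop (𝓝 (qPochInf x p)) := by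
  have h := (multipliable_one_add_of_summable (summable_E x hp)).tendsto_prod_tprod_nat
  simpa only [qPochInf, ← sub_eq_add_neg] using h

lemma one_sub_ne {x p : ℂ} (hx : ‖x‖ < 1) (hp : ‖p‖ < 1) (k : ℕ) : 1 - x * p ^ k ≠ 0 := by
  intro h
  have h1 : x * p ^ k = 1 := (sub_eq_zero.mp h).symm
  have h2 : ‖x * p ^ k‖ < 1 := by
    rw [norm_mul, norm_pow]
    calc ‖x‖ * ‖p‖ ^ k ≤ ‖x‖ * 1 := by
          gcongr
          exact pow_le_one₀ (norm_nonneg _) hp.le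
      _ < 1 := by simpa using hx
  rw [h1] at h2
  simp at h2

lemma E_ne_zero {x p : ℂ} (hx : ‖x‖ < 1) (hp : ‖p‖ < 1) : qPochInf x p ≠ 0 := by
  have h := tprod_one_add_ne_zero_of_summable (f := fun k : ℕ => -(x * p ^ k))
    (fun k => by simpa only [← sub_eq_add_neg] using one_sub_ne hx hp k) (summable_E x hp)
  simpa only [qPochInf, ← sub_eq_add_neg] using h

lemma norm_pow_lt {p : ℂ} (hp : ‖p‖ < 1) {n : ℕ} (hn : n ≠ 0) : ‖p ^ n‖ < 1 := by
  rw [norm_pow]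
  exact pow_lt_one₀ (norm_nonneg _) hp hn

lemma E_split (x : ℂ) {p : ℂ} (hp : ‖p‖ < 1) {N : ℕ} (hN : N ≠ 0) :
    qPochInf x p = ∏ i ∈ Finset.range N, qPochInf (x * p ^ i) (p ^ N) := by
  have h1 : Tendsto (fun n => ∏ k ∈ Finset.range (N * n), (1 - x * p ^ k)) atTop
      (𝓝 (qPochInf x p)) :=
    (tendsto_E x hp).comp (tendsto_id.const_mul_atTop' (Nat.pos_of_ne_zero hN))
  have h2 : Tendsto (fun n => ∏ i ∈ Finset.range N, ∏ k ∈ Finset.range n,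
      (1 - (x * p ^ i) * (p ^ N) ^ k)) atTop
      (𝓝 (∏ i ∈ Finset.range N, qPochInf (x * p ^ i) (p ^ N))) :=
    tendsto_finsetProd _ fun i _ => tendsto_E _ (norm_pow_lt hp hN)
  refine tendsto_nhds_unique h1 (h2.congr fun n => ?_)
  induction n with
  | zero => simp
  | succ n ih =>
    rw [Nat.mul_succ, Finset.prod_range_add, ← ih, ← Finset.prod_mul_distrib]
    refine Finset.prod_congr rfl fun i _ => ?_
    rw [Finset.prod_range_succ]
    congr 2
    rw [pow_add, pow_mul]
    ring

lemma E_neg (x : ℂ) {p : ℂ} (hp : ‖p‖ < 1) :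
    qPochInf x p * qPochInf (-x) p = qPochInf (x ^ 2) (p ^ 2) := by
  refine tendsto_nhds_unique ((tendsto_E x hp).mul (tendsto_E (-x) hp))
    ((tendsto_E (x ^ 2) (norm_pow_lt hp two_ne_zero)).congr fun n => ?_)
  rw [← Finset.prod_mul_distrib]
  refine Finset.prod_congr rfl fun i _ => ?_
  ring

/-- finite products `(p;p)_m` -/
noncomputable def P (p : ℂ) (m : ℕ) : ℂ := ∏ k ∈ Finset.range m, (1 - p * p ^ k)

/-- reciprocal of `(p;p)_m`, extended by zero to negative `m` -/
noncomputable def g (p : ℂ) (m : ℤ) : ℂ := if 0 ≤ m then (P p m.toNat)⁻¹ else 0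

lemma P_ne {p : ℂ} (hp : ‖p‖ < 1) (m : ℕ) : P p m ≠ 0 :=
  Finset.prod_ne_zero_iff.mpr fun k _ => one_sub_ne hp hp k

lemma g_rec {p : ℂ} (hp : ‖p‖ < 1) (m : ℤ) : g p (m - 1) = (1 - p ^ m) * g p m := by
  unfold g
  rcases lt_trichotomy m 0 with h | h | h
  · rw [if_neg (by omega), if_neg (by omega), mul_zero]
  · subst h
    simp
  · obtain ⟨k, rfl⟩ : ∃ k : ℕ, m = k + 1 := ⟨(m - 1).toNat, by omega⟩
    rw [if_pos (by omega), if_pos (by omega)]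
    have e1 : ((k : ℤ) + 1 - 1).toNat = k := by omega
    have e2 : ((k : ℤ) + 1).toNat = k + 1 := by omega
    have e3 : P p (k + 1) = P p k * (1 - p * p ^ k) := Finset.prod_range_succ _ _
    have h1 := P_ne hp k
    have h2 := one_sub_ne hp hp k
    have e4 : p ^ ((k : ℤ) + 1) = p * p ^ k := by
      rw [← pow_succ']
      exact_mod_cast zpow_natCast p (k + 1)
    rw [e1, e2, e3, e4]
    field_simp

lemma T_pred {a b : ℂ} (ha : a ≠ 0) (hb : b ≠ 0) (j : ℤ) :
    a * T a b (j - 1) = T a b j * (a * b) ^ (1 - j) := by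
  have e1 : tri (j - 1) = tri j - j := tri_eq (by linear_combination two_tri j)
  have e2 : tri (-(j - 1)) = tri (-j) + (1 - j) := tri_eq (by linear_combination two_tri (-j))
  unfold T
  rw [e1, e2, mul_zpow, zpow_add₀ hb, zpow_sub₀ ha, zpow_sub₀ ha, zpow_one]
  ring

lemma T_succ {a b : ℂ} (ha : a ≠ 0) (hb : b ≠ 0) (j : ℤ) :
    b * T a b (j + 1) = T a b j * (a * b) ^ (1 + j) := by
  have e1 : tri (j + 1) = tri j + (1 + j) := tri_eq (by linear_combination two_tri j)
  have e2 : tri (-(j + 1)) = tri (-j) + j := tri_eq (by linear_combination two_tri (-j))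
  unfold T
  rw [e1, e2, mul_zpow, zpow_add₀ ha, zpow_add₀ hb, zpow_add₀ hb, zpow_one]
  ring

/-- coefficients of the finite triple product -/
noncomputable def c (p : ℂ) (n : ℕ) (j : ℤ) : ℂ := P p (2 * n) * g p (n - j) * g p (n + j)

lemma c_rec {p : ℂ} (hp0 : p ≠ 0) (hp : ‖p‖ < 1) (n : ℕ) (j : ℤ) :
    c p (n + 1) j = c p n j * (1 + p ^ (2 * n + 1)) + c p n (j - 1) * p ^ (n + 1 - j : ℤ)
      + c p n (j + 1) * p ^ (n + 1 + j : ℤ) := by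
  unfold c
  have a1 := g_rec hp ((n : ℤ) + 1 - j)
  have a2 := g_rec hp ((n : ℤ) + 1 + j)
  have a3 := g_rec hp ((n : ℤ) - j)
  have a4 := g_rec hp ((n : ℤ) + j)
  rw [show (n : ℤ) + 1 - j - 1 = n - j by ring] at a1
  rw [show (n : ℤ) + 1 + j - 1 = n + j by ring] at a2
  have hP : P p (2 * (n + 1)) = P p (2 * n) * (1 - p ^ (2 * n + 1)) * (1 - p ^ (2 * n + 2)) := by
    rw [show 2 * (n + 1) = 2 * n + 1 + 1 by ring]
    unfold P
    rw [Finset.prod_range_succ, Finset.prod_range_succ]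
    ring
  have b1 : p ^ ((n : ℤ) - j) = p ^ ((n : ℤ) + 1 - j) / p := by
    rw [show (n : ℤ) - j = (n + 1 - j) - 1 by ring, zpow_sub_one₀ hp0]
    rfl
  have b2 : p ^ ((n : ℤ) + j) = p ^ ((n : ℤ) + 1 + j) / p := by
    rw [show (n : ℤ) + j = (n + 1 + j) - 1 by ring, zpow_sub_one₀ hp0]
    rfl
  have b3 : p ^ (2 * n + 2) = p ^ ((n : ℤ) + 1 - j) * p ^ ((n : ℤ) + 1 + j) := by
    rw [← zpow_add₀ hp0, ← zpow_natCast]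
    congr 1
    push_cast
    ring
  have b4 : p ^ (2 * n + 1) = p ^ ((n : ℤ) + 1 - j) * p ^ ((n : ℤ) + 1 + j) / p := by
    rw [← b3, pow_succ p (2 * n + 1)]
    field_simp
  rw [b1] at a3
  rw [b2] at a4
  rw [show ((n + 1 : ℕ) : ℤ) - j = n + 1 - j by push_cast; ring,
    show ((n + 1 : ℕ) : ℤ) + j = n + 1 + j by push_cast; ring,
    show (n : ℤ) - (j - 1) = n + 1 - j by ring, show (n : ℤ) + (j - 1) = n + j - 1 by ring,
    show (n : ℤ) - (j + 1) = n - j - 1 by ring, show (n : ℤ) + (j + 1) = n + 1 + j by ring,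
    hP, a3, a4, a1, a2, b3, b4]
  field_simp
  ring

lemma finite_triple {a b : ℂ} (ha : a ≠ 0) (hb : b ≠ 0) (hp : ‖a * b‖ < 1) (n : ℕ) :
    HasSum (fun j => c (a * b) n j * T a b j)
      ((∏ k ∈ Finset.range n, (1 - (-a) * (a * b) ^ k)) *
        ∏ k ∈ Finset.range n, (1 - (-b) * (a * b) ^ k)) := by
  have hp0 : a * b ≠ 0 := mul_ne_zero ha hb
  induction n with
  | zero =>
    have h := hasSum_single (f := fun j => c (a * b) 0 j * T a b j) 0 (by
      intro j hj
      rcases lt_or_gt_of_ne hj with h | h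
      · have : g (a * b) j = 0 := if_neg (by omega)
        simp [c, this]
      · have : g (a * b) (-j) = 0 := if_neg (by omega)
        simp [c, this])
    have e : c (a * b) 0 0 * T a b 0 = 1 := by
      simp [c, g, P, T, tri]
    rw [e] at h
    simpa using h
  | succ n ih =>
    have i1 := ((Equiv.subRight (1 : ℤ)).hasSum_iff
      (f := fun j => c (a * b) n j * T a b j)).mpr ih
    simp only [Function.comp_def, Equiv.subRight_apply] at i1
    have i2 := ((Equiv.addRight (1 : ℤ)).hasSum_iff
      (f := fun j => c (a * b) n j * T a b j)).mpr ih
    simp only [Function.comp_def, Equiv.coe_addRight] at i2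
    have h := ((ih.mul_left (1 + (a * b) ^ (2 * n + 1))).add
      (i1.mul_left (a * (a * b) ^ n))).add (i2.mul_left (b * (a * b) ^ n))
    rw [Finset.prod_range_succ, Finset.prod_range_succ]
    have hv : ∀ s t : ℂ, (s * (1 - (-a) * (a * b) ^ n)) * (t * (1 - (-b) * (a * b) ^ n))
        = (1 + (a * b) ^ (2 * n + 1)) * (s * t) + a * (a * b) ^ n * (s * t)
          + b * (a * b) ^ n * (s * t) := by
      intro s t
      ring
    rw [hv]
    refine (congrArg (fun F => HasSum F _) (funext fun j => ?_)).mpr h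
    rw [c_rec hp0 hp]
    have t1 := T_pred ha hb j
    have t2 := T_succ ha hb j
    have z1 : (a * b) ^ (n + 1 - j : ℤ) = (a * b) ^ n * (a * b) ^ (1 - j) := by
      rw [add_sub_assoc, zpow_add₀ hp0, zpow_natCast]
    have z2 : (a * b) ^ (n + 1 + j : ℤ) = (a * b) ^ n * (a * b) ^ (1 + j) := by
      rw [add_assoc, zpow_add₀ hp0, zpow_natCast]
    rw [z1, z2]
    linear_combination -(c (a * b) n (j - 1) * (a * b) ^ n) * t1
      - (c (a * b) n (j + 1) * (a * b) ^ n) * t2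

/-- Jacobi triple product -/
lemma jtp {a b : ℂ} (ha : a ≠ 0) (hb : b ≠ 0) (ha1 : ‖a‖ < 1) (hb1 : ‖b‖ < 1) :
    ramTheta a b = qPochInf (-a) (a * b) * qPochInf (-b) (a * b) * qPochInf (a * b) (a * b) := by
  have hp : ‖a * b‖ < 1 := by
    rw [norm_mul]
    exact mul_lt_one_of_nonneg_of_lt_one_left (norm_nonneg _) ha1 hb1.le
  have hE : qPochInf (a * b) (a * b) ≠ 0 := E_ne_zero hp hp
  have hP : Tendsto (P (a * b)) atTop (𝓝 (qPochInf (a * b) (a * b))) := tendsto_E _ hp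
  have hPi : Tendsto (fun m => (P (a * b) m)⁻¹) atTop (𝓝 (qPochInf (a * b) (a * b))⁻¹) :=
    hP.inv₀ hE
  have hg : Tendsto (g (a * b)) atTop (𝓝 (qPochInf (a * b) (a * b))⁻¹) := by
    have h1 : Tendsto Int.toNat atTop atTop := by
      refine tendsto_atTop.mpr fun n => ?_
      filter_upwards [eventually_ge_atTop (n : ℤ)] with m hm
      omega
    refine (hPi.comp h1).congr' ?_
    filter_upwards [eventually_ge_atTop (0 : ℤ)] with m hm
    simp [g, hm]
  obtain ⟨M, hM⟩ := hP.norm.bddAbove_range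
  obtain ⟨M', hM'⟩ := hPi.norm.bddAbove_range
  have hM0 : 0 ≤ M := (norm_nonneg _).trans (hM ⟨0, rfl⟩)
  have hM0' : 0 ≤ M' := (norm_nonneg _).trans (hM' ⟨0, rfl⟩)
  have hgM : ∀ m, ‖g (a * b) m‖ ≤ M' := by
    intro m
    unfold g
    split_ifs
    · exact hM' ⟨m.toNat, rfl⟩
    · simpa using hM0'
  have hc : ∀ j, Tendsto (fun n : ℕ => c (a * b) n j * T a b j) atTop
      (𝓝 ((qPochInf (a * b) (a * b))⁻¹ * T a b j)) := by
    intro j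
    have k1 : Tendsto (fun n : ℕ => g (a * b) (n - j)) atTop
        (𝓝 (qPochInf (a * b) (a * b))⁻¹) :=
      hg.comp ((tendsto_atTop_add_const_right atTop (-j) tendsto_natCast_atTop_atTop))
    have k2 : Tendsto (fun n : ℕ => g (a * b) (n + j)) atTop
        (𝓝 (qPochInf (a * b) (a * b))⁻¹) :=
      hg.comp ((tendsto_atTop_add_const_right atTop j tendsto_natCast_atTop_atTop))
    have k3 : Tendsto (fun n : ℕ => P (a * b) (2 * n)) atTop
        (𝓝 (qPochInf (a * b) (a * b))) :=
      hP.comp (tendsto_id.const_mul_atTop' two_pos)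
    have k4 := ((k3.mul k1).mul k2).mul_const (T a b j)
    rw [mul_inv_cancel₀ hE, one_mul] at k4
    exact k4
  have hlim := tendsto_tsum_of_dominated_convergence
    (bound := fun j => (M * M' * M') * ‖T a b j‖)
    ((summable_norm_T ha1 hb1).mul_left _) hc (Eventually.of_forall fun n j => by
      rw [norm_mul, c, norm_mul, norm_mul]
      gcongr
      · exact hM ⟨2 * n, rfl⟩
      · exact hgM _
      · exact hgM _)
  have hlim2 : Tendsto (fun n : ℕ => ∑' j, c (a * b) n j * T a b j) atTop
      (𝓝 (qPochInf (-a) (a * b) * qPochInf (-b) (a * b))) := by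
    refine ((tendsto_E (-a) hp).mul (tendsto_E (-b) hp)).congr fun n => ?_
    exact (finite_triple ha hb hp n).tsum_eq.symm
  have h := tendsto_nhds_unique hlim2 hlim
  rw [tsum_mul_left, ← ramTheta_eq] at h
  rw [h]
  field_simp

lemma theta_ne_zero {a b : ℂ} (ha : a ≠ 0) (hb : b ≠ 0) (ha1 : ‖a‖ < 1) (hb1 : ‖b‖ < 1) :
    ramTheta a b ≠ 0 := by
  have hp : ‖a * b‖ < 1 := by
    rw [norm_mul]
    exact mul_lt_one_of_nonneg_of_lt_one_left (norm_nonneg _) ha1 hb1.le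
  rw [jtp ha hb ha1 hb1]
  exact mul_ne_zero (mul_ne_zero (E_ne_zero (by simpa using ha1) hp)
    (E_ne_zero (by simpa using hb1) hp)) (E_ne_zero hp hp)

lemma E_split2 (x : ℂ) {p : ℂ} (hp : ‖p‖ < 1) :
    qPochInf x p = qPochInf x (p ^ 2) * qPochInf (x * p) (p ^ 2) := by
  rw [E_split x hp two_ne_zero]
  simp [Finset.prod_range_succ]

lemma E_split5 (x : ℂ) {p : ℂ} (hp : ‖p‖ < 1) :
    qPochInf x p = qPochInf x (p ^ 5) * qPochInf (x * p) (p ^ 5) * qPochInf (x * p ^ 2) (p ^ 5)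
      * qPochInf (x * p ^ 3) (p ^ 5) * qPochInf (x * p ^ 4) (p ^ 5) := by
  rw [E_split x hp (show 5 ≠ 0 by norm_num)]
  simp [Finset.prod_range_succ]

lemma phi_prod {x : ℂ} (hx : x ≠ 0) (hx1 : ‖x‖ < 1) :
    phi x = qPochInf (-x) (x ^ 2) ^ 2 * qPochInf (x ^ 2) (x ^ 2) := by
  unfold phi
  rw [jtp hx hx hx1 hx1]
  ring_nf

lemma psi_prod {x : ℂ} (hx : x ≠ 0) (hx1 : ‖x‖ < 1) :
    psi x = qPochInf (-x) (x ^ 2) * qPochInf (x ^ 4) (x ^ 4) := by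
  unfold psi
  rw [jtp hx (pow_ne_zero 3 hx) hx1 (norm_pow_lt hx1 (by norm_num)),
    E_split2 (-x) (norm_pow_lt hx1 two_ne_zero)]
  rw [show x * x ^ 3 = x ^ 4 by ring, show (x ^ 2) ^ 2 = x ^ 4 by ring,
    show -x * x ^ 2 = -x ^ 3 by ring]

lemma psi_aux {p : ℂ} (hp0 : p ≠ 0) (hp : ‖p‖ < 1) :
    qPochInf p p * psi p = qPochInf (p ^ 2) (p ^ 2) ^ 2 := by
  have hp2 : ‖p ^ 2‖ < 1 := norm_pow_lt hp two_ne_zero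
  have h1 := E_split2 p hp
  have h2 := E_neg p hp2
  have h3 := E_split2 (p ^ 2) hp2
  rw [show p * p = p ^ 2 by ring] at h1
  rw [show (p ^ 2) ^ 2 = p ^ 4 by ring] at h2
  rw [show (p ^ 2) ^ 2 = p ^ 4 by ring, show p ^ 2 * p ^ 2 = p ^ 4 by ring] at h3
  rw [psi_prod hp0 hp, h1]
  linear_combination qPochInf (p ^ 2) (p ^ 2) * qPochInf (p ^ 4) (p ^ 4) * h2
    - qPochInf (p ^ 2) (p ^ 2) * h3

lemma theta_psi {a b : ℂ} (ha : a ≠ 0) (hb : b ≠ 0) (ha1 : ‖a‖ < 1) (hb1 : ‖b‖ < 1) :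
    ramTheta a b * psi (a * b) = ramTheta a (a * b ^ 2) * ramTheta b (a ^ 2 * b) := by
  have hm : ∀ x y : ℂ, ‖x‖ < 1 → ‖y‖ < 1 → ‖x * y‖ < 1 := fun x y hx hy => by
    rw [norm_mul]
    exact mul_lt_one_of_nonneg_of_lt_one_left (norm_nonneg _) hx hy.le
  have hp := hm a b ha1 hb1
  rw [jtp ha hb ha1 hb1,
    jtp ha (mul_ne_zero ha (pow_ne_zero 2 hb)) ha1 (hm _ _ ha1 (norm_pow_lt hb1 two_ne_zero)),
    jtp hb (mul_ne_zero (pow_ne_zero 2 ha) hb) hb1 (hm _ _ (norm_pow_lt ha1 two_ne_zero) hb1),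
    mul_assoc, psi_aux (mul_ne_zero ha hb) hp, E_split2 (-a) hp, E_split2 (-b) hp,
    show a * (a * b ^ 2) = (a * b) ^ 2 by ring, show b * (a ^ 2 * b) = (a * b) ^ 2 by ring,
    show -(a * b ^ 2) = -b * (a * b) by ring, show -(a ^ 2 * b) = -a * (a * b) by ring]
  ring

end RT

namespace RT

lemma prod_id {x : ℂ} (hx : x ≠ 0) (hx1 : ‖x‖ < 1) :
    ramTheta (-x) (-x ^ 9) * ramTheta (-x ^ 3) (-x ^ 7) * (phi (-x ^ 10) * psi (-x))
      = ramTheta (x ^ 4) (x ^ 6) * ramTheta (x ^ 2) (x ^ 8) * (phi (-x) * psi (x ^ 5)) := by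
  have hn : ∀ n : ℕ, n ≠ 0 → ‖x ^ n‖ < 1 := fun n hn => norm_pow_lt hx1 hn
  have hn' : ∀ n : ℕ, n ≠ 0 → ‖-x ^ n‖ < 1 := fun n hn => by
    rw [norm_neg]
    exact norm_pow_lt hx1 hn
  have h0 : ∀ n : ℕ, x ^ n ≠ 0 := fun n => pow_ne_zero n hx
  have h0' : ∀ n : ℕ, -x ^ n ≠ 0 := fun n => neg_ne_zero.mpr (h0 n)
  have hx' : -x ≠ 0 := neg_ne_zero.mpr hx
  have hx1' : ‖-x‖ < 1 := by rwa [norm_neg]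
  rw [jtp hx' (h0' 9) hx1' (hn' 9 (by norm_num)),
    jtp (h0' 3) (h0' 7) (hn' 3 (by norm_num)) (hn' 7 (by norm_num)),
    jtp (h0 4) (h0 6) (hn 4 (by norm_num)) (hn 6 (by norm_num)),
    jtp (h0 2) (h0 8) (hn 2 (by norm_num)) (hn 8 (by norm_num)),
    phi_prod (h0' 10) (hn' 10 (by norm_num)), phi_prod hx' hx1',
    psi_prod hx' hx1', psi_prod (h0 5) (hn 5 (by norm_num))]
  have s1 := E_split5 x (hn 2 (by norm_num))
  have s2 := E_split5 (-x ^ 2) (hn 2 (by norm_num))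
  have s3 := E_neg (x ^ 2) (hn 2 (by norm_num))
  have s4 := E_neg (x ^ 5) (hn 10 (by norm_num))
  have s5 := E_split2 (x ^ 10) (hn 10 (by norm_num))
  have s6 := E_neg (x ^ 10) (hn 10 (by norm_num))
  have n4 : qPochInf (x ^ 20) (x ^ 20) ≠ 0 :=
    E_ne_zero (hn 20 (by norm_num)) (hn 20 (by norm_num))
  rw [show (x ^ 2) ^ 5 = x ^ 10 by ring, show x * x ^ 2 = x ^ 3 by ring,
    show x * (x ^ 2) ^ 2 = x ^ 5 by ring, show x * (x ^ 2) ^ 3 = x ^ 7 by ring,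
    show x * (x ^ 2) ^ 4 = x ^ 9 by ring] at s1
  rw [show (x ^ 2) ^ 5 = x ^ 10 by ring, show -x ^ 2 * x ^ 2 = -x ^ 4 by ring,
    show -x ^ 2 * (x ^ 2) ^ 2 = -x ^ 6 by ring, show -x ^ 2 * (x ^ 2) ^ 3 = -x ^ 8 by ring,
    show -x ^ 2 * (x ^ 2) ^ 4 = -x ^ 10 by ring] at s2
  rw [show (x ^ 2) ^ 2 = x ^ 4 by ring] at s3
  rw [show (x ^ 5) ^ 2 = x ^ 10 by ring, show (x ^ 10) ^ 2 = x ^ 20 by ring] at s4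
  rw [show (x ^ 10) ^ 2 = x ^ 20 by ring, show x ^ 10 * x ^ 10 = x ^ 20 by ring] at s5
  rw [show (x ^ 10) ^ 2 = x ^ 20 by ring] at s6
  rw [show -x * -x ^ 9 = x ^ 10 by ring, show -x ^ 3 * -x ^ 7 = x ^ 10 by ring,
    show x ^ 4 * x ^ 6 = x ^ 10 by ring, show x ^ 2 * x ^ 8 = x ^ 10 by ring,
    show (-x ^ 10) ^ 2 = x ^ 20 by ring, show (-x) ^ 2 = x ^ 2 by ring,
    show (-x) ^ 4 = x ^ 4 by ring, show (x ^ 5) ^ 2 = x ^ 10 by ring,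
    show (x ^ 5) ^ 4 = x ^ 20 by ring]
  simp only [neg_neg]
  generalize qPochInf x (x ^ 2) = e at *
  generalize qPochInf (-x ^ 2) (x ^ 2) = m2 at *
  generalize qPochInf (x ^ 2) (x ^ 2) = E2 at *
  generalize qPochInf (x ^ 4) (x ^ 4) = E4 at *
  generalize qPochInf (x ^ 10) (x ^ 10) = E10 at *
  generalize qPochInf (x ^ 20) (x ^ 20) = E20 at *
  generalize qPochInf (x ^ 10) (x ^ 20) = u at *
  generalize qPochInf (x ^ 5) (x ^ 10) = K at *
  generalize qPochInf (-x ^ 5) (x ^ 10) = K' at *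
  generalize qPochInf (-x ^ 10) (x ^ 10) = m10 at *
  generalize qPochInf x (x ^ 10) = a1 at *
  generalize qPochInf (x ^ 3) (x ^ 10) = a3 at *
  generalize qPochInf (x ^ 7) (x ^ 10) = a7 at *
  generalize qPochInf (x ^ 9) (x ^ 10) = a9 at *
  generalize qPochInf (-x ^ 2) (x ^ 10) = b2 at *
  generalize qPochInf (-x ^ 4) (x ^ 10) = b4 at *
  generalize qPochInf (-x ^ 6) (x ^ 10) = b6 at *
  generalize qPochInf (-x ^ 8) (x ^ 10) = b8 at *
  have um : u * m10 = 1 := by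
    apply mul_right_cancel₀ n4
    linear_combination s6 - m10 * s5
  linear_combination -(a1 * a3 * a7 * a9 * E10 ^ 2 * u ^ 2 * E20 * e) * s3
    + (a1 * a3 * a7 * a9 * E10 ^ 2 * u ^ 2 * E20 * e * E2) * s2
    + (a1 * a3 * a7 * a9 * E10 ^ 2 * u * E20 * e * E2 * (b2 * b4 * b6 * b8)) * um
    - (a1 * a3 * a7 * a9 * E10 ^ 2 * E20 * e * E2 * (b2 * b4 * b6 * b8)) * s4
    - (b2 * b4 * b6 * b8 * E10 ^ 2 * e * E2 * K' * E20) * s1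

end RT
open RT

theorem stmt13 (q : ℝ) (hq0 : 0 < q) (hq1 : q < 1) :
    Omega1 q ≠ 0 ∧ Omega2 q ≠ 0 ∧
    1 / Omega1 q ^ 2 + 1 / Omega2 q ^ 2
      = phi (-(q : ℂ)) ^ 4 / (16 * (q : ℂ) ^ 4 * psi (-(q : ℂ) ^ 5) ^ 4)
        + phi (-(q : ℂ) ^ 5) ^ 4 / (16 * (q : ℂ) ^ 4 * psi (-(q : ℂ) ^ 5) ^ 4)
        - phi (-(q : ℂ)) ^ 2 * phi (-(q : ℂ) ^ 5) ^ 2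
            / (8 * (q : ℂ) ^ 4 * psi (-(q : ℂ) ^ 5) ^ 4)
        + 2 * phi (-(q : ℂ)) * psi ((q : ℂ) ^ 5)
            / ((q : ℂ) * phi (-(q : ℂ) ^ 10) * psi (-(q : ℂ))) := by
  have hx : (q : ℂ) ≠ 0 := by exact_mod_cast hq0.ne'
  have hx1 : ‖(q : ℂ)‖ < 1 := by
    rw [Complex.norm_real, Real.norm_of_nonneg hq0.le]
    exact hq1
  unfold Omega1 Omega2
  generalize (q : ℂ) = x at *
  have hn : ∀ n : ℕ, n ≠ 0 → ‖x ^ n‖ < 1 := fun n hn => norm_pow_lt hx1 hn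
  have hn' : ∀ n : ℕ, n ≠ 0 → ‖-x ^ n‖ < 1 := fun n hn => by
    rw [norm_neg]
    exact norm_pow_lt hx1 hn
  have h0 : ∀ n : ℕ, x ^ n ≠ 0 := fun n => pow_ne_zero n hx
  have h0' : ∀ n : ℕ, -x ^ n ≠ 0 := fun n => neg_ne_zero.mpr (h0 n)
  have hx' : -x ≠ 0 := neg_ne_zero.mpr hx
  have hx1' : ‖-x‖ < 1 := by rwa [norm_neg]
  have nA : ramTheta (-x) (-x ^ 9) ≠ 0 := theta_ne_zero hx' (h0' 9) hx1' (hn' 9 (by norm_num))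
  have nB : ramTheta (-x ^ 3) (-x ^ 7) ≠ 0 :=
    theta_ne_zero (h0' 3) (h0' 7) (hn' 3 (by norm_num)) (hn' 7 (by norm_num))
  have nC : ramTheta (x ^ 4) (x ^ 6) ≠ 0 :=
    theta_ne_zero (h0 4) (h0 6) (hn 4 (by norm_num)) (hn 6 (by norm_num))
  have nD : ramTheta (x ^ 2) (x ^ 8) ≠ 0 :=
    theta_ne_zero (h0 2) (h0 8) (hn 2 (by norm_num)) (hn 8 (by norm_num))
  have nPsi5 : psi (-x ^ 5) ≠ 0 :=
    theta_ne_zero (h0' 5) (pow_ne_zero 3 (h0' 5)) (hn' 5 (by norm_num))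
      (norm_pow_lt (hn' 5 (by norm_num)) (by norm_num))
  have nPsi : psi (-x) ≠ 0 :=
    theta_ne_zero hx' (pow_ne_zero 3 hx') hx1' (norm_pow_lt hx1' (by norm_num))
  have nPhi : phi (-x ^ 10) ≠ 0 :=
    theta_ne_zero (h0' 10) (h0' 10) (hn' 10 (by norm_num)) (hn' 10 (by norm_num))
  have e1 := phi_five hx' hx1'
  rw [show (-x) ^ 5 = -x ^ 5 by ring, show (-x) ^ 7 = -x ^ 7 by ring,
    show (-x) ^ 3 = -x ^ 3 by ring, show (-x) ^ 9 = -x ^ 9 by ring,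
    ramTheta_comm (-x ^ 7), ramTheta_comm (-x ^ 9)] at e1
  have i1 : -x * -x ^ 3 = x ^ 4 := by ring
  have i2 : x ^ 4 * x ^ 2 = x ^ 6 := by ring
  have i3 : -x * x ^ 2 = -x ^ 3 := by ring
  have i4 : x ^ 4 * -x ^ 3 = -x ^ 7 := by ring
  have i5 : (-x) ^ 2 * x ^ 4 * -x ^ 3 = -x ^ 9 := by ring
  have i6 : x ^ 2 / -x = -x := by field_simp
  have i7 : (-x) ^ 2 * x ^ 4 * x ^ 2 = x ^ 8 := by ring
  have i8 : -x ^ 3 / -x = x ^ 2 := by field_simp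
  have e2 := theta_mul_split (a := -x) (b := x ^ 4) (c := -x ^ 3) (d := x ^ 2) hx' (h0 4) (h0' 3)
    (h0 2) (by ring) hx1' (hn 4 (by norm_num)) (hn' 3 (by norm_num)) (hn 2 (by norm_num))
    (by rw [i1]; exact hn 4 (by norm_num)) (by rw [i2]; exact hn 6 (by norm_num))
    (by rw [i3]; exact hn' 3 (by norm_num)) (by rw [i4]; exact hn' 7 (by norm_num))
    (by rw [i5]; exact hn' 9 (by norm_num)) (by rw [i6]; exact hx1')
    (by rw [i7]; exact hn 8 (by norm_num)) (by rw [i8]; exact hn 2 (by norm_num))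
  rw [i1, i2, i3, i4, i5, i6, i7, i8, ramTheta_comm (-x ^ 9), ramTheta_comm (x ^ 8)] at e2
  have e3 := theta_psi hx' (h0 4) hx1' (hn 4 (by norm_num))
  rw [show -x * x ^ 4 = -x ^ 5 by ring, show -x * (x ^ 4) ^ 2 = -x ^ 9 by ring,
    show (-x) ^ 2 * x ^ 4 = x ^ 6 by ring] at e3
  have e4 := theta_psi (h0' 3) (h0 2) (hn' 3 (by norm_num)) (hn 2 (by norm_num))
  rw [show -x ^ 3 * x ^ 2 = -x ^ 5 by ring, show -x ^ 3 * (x ^ 2) ^ 2 = -x ^ 7 by ring,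
    show (-x ^ 3) ^ 2 * x ^ 2 = x ^ 8 by ring] at e4
  have e5 := prod_id hx hx1
  refine ⟨div_ne_zero nC nA, div_ne_zero (mul_ne_zero hx nD) nB, ?_⟩
  generalize ramTheta (-x) (-x ^ 9) = A at *
  generalize ramTheta (-x ^ 3) (-x ^ 7) = B at *
  generalize ramTheta (x ^ 4) (x ^ 6) = C at *
  generalize ramTheta (x ^ 2) (x ^ 8) = D at *
  generalize ramTheta (-x) (x ^ 4) = F at *
  generalize ramTheta (-x ^ 3) (x ^ 2) = G at *
  generalize psi (-x ^ 5) = S at *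
  generalize psi (-x) = S1 at *
  generalize psi (x ^ 5) = S5 at *
  generalize phi (-x ^ 10) = R10 at *
  generalize phi (-x ^ 5) = R5 at *
  generalize phi (-x) = R at *
  have k1 : (C * B - x * (A * D)) * S ^ 2 = A * C * (B * D) := by
    rw [← e3, ← e4]
    linear_combination -S ^ 2 * e2
  have k2 : B / (x * D) - A / C = A * B / (x * S ^ 2) := by
    field_simp
    linear_combination k1
  have k3 : 2 * R * S5 / (x * R10 * S1) = 2 * (A * B) / (x * (C * D)) := by
    field_simp
    linear_combination -e5
  have k4 : R ^ 4 / (16 * x ^ 4 * S ^ 4) + R5 ^ 4 / (16 * x ^ 4 * S ^ 4)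
      - R ^ 2 * R5 ^ 2 / (8 * x ^ 4 * S ^ 4) = (A * B / (x * S ^ 2)) ^ 2 := by
    have : R ^ 4 / (16 * x ^ 4 * S ^ 4) + R5 ^ 4 / (16 * x ^ 4 * S ^ 4)
      - R ^ 2 * R5 ^ 2 / (8 * x ^ 4 * S ^ 4) = (R ^ 2 - R5 ^ 2) ^ 2 / (16 * x ^ 4 * S ^ 4) := by
      field_simp
      ring
    rw [this, e1]
    field_simp
    ring
  rw [k4, k3, ← k2]
  field_simp
  ring
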